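/- Let ρ : [0,T) × ℝ → (0,∞) be a smooth solution of the renormalized curvature flow PDE ∂_t ρ = ρ² ∂²_θ ρ + ρ²(ρ − 2h_t), 2π-periodic in θ and satisfying the closure conditions for every t, with strictly positive initial curvature. Then for all t ∈ [0,T) and all θ, ρ(t,θ) ≥ ρ_inf(0) · e^{−h₀² t}, where ρ_inf(0) = min_θ ρ(0,θ) and h₀ = h_0; in particular the curves remain strictly convex. -/

import Mathlib

/-!
The bound is a minimum principle. At a spatial minimum of `ρ(t,·)` one has `∂²_θ ρ ≥ 0`, hence
`∂ₜρ ≥ ρ (ρ² - 2hρ) ≥ -h² ρ` by completing the square, and `0 ≤ h_t ≤ h₀` turns this into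
`∂ₜρ ≥ -h₀² ρ`. Then `e^{h₀² t} ρ + ε t` cannot have its minimum over `[0, t₁] × [0, 2π]` at a positive
time, and letting `ε → 0` gives the estimate.

The remaining point is that `h = σ/λ` is nonnegative and nonincreasing
(`IsRCFSolution.hRatio_antitoneOn`). With `r = 1/ρ` and support function `p = supp r`, which satisfies
`p'' + p = r`, the flow reads `∂ₜr = 2h - (∂²_θ ρ + ρ)`. Differentiating under the integral sign and
using Green's identity (`green`) gives `σ' = 4πh - ∫ρ` and `λ' = 2hσ - 2π`. By Cauchy–Schwarz,
`σ ∫ρ ≥ 4π²`, so `σλ (σ'λ - σλ') ≤ -2 (σ² - πλ)(σ² - 2πλ)`, and the weak isoperimetric inequality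
`σ² ≥ 2πλ` suffices for `h' ≤ 0`.

For this inequality and for `λ > 0`, the closure conditions allow the area to be written as
`4λ = ∬ K(|θ - β|) r(β) r(θ) dβ dθ` with `K(φ) = (1 - φ/π) sin φ` (`four_area`). On `[0, 2π]`,
`0 ≤ K ≤ 2/π`, the upper bound being `u sin u ≤ 2` for `|u| ≤ π`.
-/


open Real Set Filter MeasureTheory Topology NNReal

/-- The perimeter of the strictly convex curve with curvature function `ρ`
in tangent-angle coordinates: `σ = ∫₀^{2π} dθ/ρ(θ)`. -/
noncomputable def perim (ρ : ℝ → ℝ) : ℝ := ∫ θ in (0:ℝ)..(2 * π), 1 / ρ θ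

/-- The curve associated to a curvature function `ρ` in tangent-angle coordinates:
`C(θ) = (∫₀^θ cos β/ρ(β) dβ, ∫₀^θ sin β/ρ(β) dβ)`. -/
noncomputable def curveP (ρ : ℝ → ℝ) (θ : ℝ) : ℝ × ℝ :=
  (∫ β in (0:ℝ)..θ, Real.cos β / ρ β, ∫ β in (0:ℝ)..θ, Real.sin β / ρ β)

/-- The enclosed area `λ = ½ ∫₀^{2π} ⟨C(θ), ν(θ)⟩/ρ(θ) dθ`, with outward normal
`ν(θ) = (sin θ, −cos θ)`. -/
noncomputable def encArea (ρ : ℝ → ℝ) : ℝ :=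
  (1 / 2) * ∫ θ in (0:ℝ)..(2 * π),
    ((curveP ρ θ).1 * Real.sin θ - (curveP ρ θ).2 * Real.cos θ) / ρ θ

/-- The ratio `h = σ/λ`. -/
noncomputable def hRatio (ρ : ℝ → ℝ) : ℝ := perim ρ / encArea ρ

/-- `ρ : [0,T) × ℝ → (0,∞)` is a smooth solution of the renormalized curvature flow PDE
`∂_t ρ = ρ² ∂²_θ ρ + ρ²(ρ − 2 h_t)`, `2π`-periodic in `θ` and satisfying the closure
conditions for every `t`. -/
def IsRCFSolution (T : ℝ) (ρ : ℝ → ℝ → ℝ) : Prop :=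
  ContDiffOn ℝ (⊤ : ℕ∞) (Function.uncurry ρ) (Ico 0 T ×ˢ (univ : Set ℝ)) ∧
  (∀ t ∈ Ico (0:ℝ) T, ∀ θ : ℝ, 0 < ρ t θ) ∧
  (∀ t ∈ Ico (0:ℝ) T, ∀ θ : ℝ, ρ t (θ + 2 * π) = ρ t θ) ∧
  (∀ t ∈ Ico (0:ℝ) T, (∫ θ in (0:ℝ)..(2 * π), Real.cos θ / ρ t θ) = 0) ∧
  (∀ t ∈ Ico (0:ℝ) T, (∫ θ in (0:ℝ)..(2 * π), Real.sin θ / ρ t θ) = 0) ∧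
  (∀ t ∈ Ico (0:ℝ) T, ∀ θ : ℝ,
    HasDerivWithinAt (fun s => ρ s θ)
      ((ρ t θ) ^ 2 * iteratedDeriv 2 (ρ t) θ + (ρ t θ) ^ 2 * (ρ t θ - 2 * hRatio (ρ t)))
      (Ico 0 T) t)

/-! ### The support function -/

/-- The support function `⟨C(θ), ν(θ)⟩` of the curve with radius of curvature `r = 1/ρ`, the origin
being the point `C(0)`. It is defined for every `r`, without sign or closure condition, so that it
can also be applied to time derivatives of `r`. -/
noncomputable def supp (r : ℝ → ℝ) (θ : ℝ) : ℝ :=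
  (∫ β in (0:ℝ)..θ, Real.cos β * r β) * Real.sin θ
    - (∫ β in (0:ℝ)..θ, Real.sin β * r β) * Real.cos θ

/-- The tangential component `⟨C(θ), (cos θ, sin θ)⟩`, which is the derivative of `supp r`. -/
noncomputable def suppDeriv (r : ℝ → ℝ) (θ : ℝ) : ℝ :=
  (∫ β in (0:ℝ)..θ, Real.cos β * r β) * Real.cos θ
    + (∫ β in (0:ℝ)..θ, Real.sin β * r β) * Real.sin θ

/-- The closure conditions of a curve, in terms of its radius of curvature `r = 1/ρ`. -/
def IsClosing (r : ℝ → ℝ) : Prop :=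
  (∫ θ in (0:ℝ)..(2 * π), Real.cos θ * r θ) = 0 ∧ (∫ θ in (0:ℝ)..(2 * π), Real.sin θ * r θ) = 0

theorem hasDerivAt_supp {r : ℝ → ℝ} (hr : Continuous r) (θ : ℝ) :
    HasDerivAt (supp r) (suppDeriv r θ) θ := by
  have hX : HasDerivAt (fun θ => ∫ β in (0:ℝ)..θ, Real.cos β * r β) (Real.cos θ * r θ) θ :=
    (Real.continuous_cos.mul hr).integral_hasStrictDerivAt 0 θ |>.hasDerivAt
  have hY : HasDerivAt (fun θ => ∫ β in (0:ℝ)..θ, Real.sin β * r β) (Real.sin θ * r θ) θ :=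
    (Real.continuous_sin.mul hr).integral_hasStrictDerivAt 0 θ |>.hasDerivAt
  refine ((hX.mul (Real.hasDerivAt_sin θ)).sub (hY.mul (Real.hasDerivAt_cos θ))).congr_deriv ?_
  simp only [suppDeriv]; ring

theorem hasDerivAt_suppDeriv {r : ℝ → ℝ} (hr : Continuous r) (θ : ℝ) :
    HasDerivAt (suppDeriv r) (r θ - supp r θ) θ := by
  have hX : HasDerivAt (fun θ => ∫ β in (0:ℝ)..θ, Real.cos β * r β) (Real.cos θ * r θ) θ :=
    (Real.continuous_cos.mul hr).integral_hasStrictDerivAt 0 θ |>.hasDerivAt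
  have hY : HasDerivAt (fun θ => ∫ β in (0:ℝ)..θ, Real.sin β * r β) (Real.sin θ * r θ) θ :=
    (Real.continuous_sin.mul hr).integral_hasStrictDerivAt 0 θ |>.hasDerivAt
  refine ((hX.mul (Real.hasDerivAt_cos θ)).add (hY.mul (Real.hasDerivAt_sin θ))).congr_deriv ?_
  simp only [supp]
  linear_combination (r θ) * (Real.sin_sq_add_cos_sq θ)

theorem continuous_supp {r : ℝ → ℝ} (hr : Continuous r) : Continuous (supp r) :=
  continuous_iff_continuousAt.2 fun θ => (hasDerivAt_supp hr θ).continuousAt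

/-- Green's identity for `f ↦ f'' + f` on `[0, 2π]`, using `p'' + p = r` for `p = supp r`. Closure
makes `p` and `p'` vanish at both end points, so `f` need not be periodic. -/
theorem green {r f f' f'' : ℝ → ℝ} (hr : Continuous r) (hc : IsClosing r)
    (hf : ∀ θ, HasDerivAt f (f' θ) θ) (hf' : ∀ θ, HasDerivAt f' (f'' θ) θ)
    (hf'' : Continuous f'') :
    ∫ θ in (0:ℝ)..(2 * π), supp r θ * (f'' θ + f θ) = ∫ θ in (0:ℝ)..(2 * π), r θ * f θ := by
  have hfc : Continuous f := continuous_iff_continuousAt.2 fun θ => (hf θ).continuousAt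
  have hp := continuous_supp hr
  have key : ∫ θ in (0:ℝ)..(2 * π), (supp r θ * (f'' θ + f θ) - r θ * f θ) = 0 := by
    rw [intervalIntegral.integral_eq_sub_of_hasDerivAt
      (f := fun θ => supp r θ * f' θ - suppDeriv r θ * f θ)]
    · simp [supp, suppDeriv, hc.1, hc.2]
    · intro θ _
      refine (((hasDerivAt_supp hr θ).mul (hf' θ)).sub
        ((hasDerivAt_suppDeriv hr θ).mul (hf θ))).congr_deriv ?_
      ring
    · exact Continuous.intervalIntegrable (by fun_prop) _ _
  rw [intervalIntegral.integral_sub (Continuous.intervalIntegrable (by fun_prop) _ _)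
    (Continuous.intervalIntegrable (by fun_prop) _ _)] at key
  linarith

theorem integral_supp {r : ℝ → ℝ} (hr : Continuous r) (hc : IsClosing r) :
    ∫ θ in (0:ℝ)..(2 * π), supp r θ = ∫ θ in (0:ℝ)..(2 * π), r θ := by
  have := green (f := fun _ => 1) (f' := fun _ => 0) (f'' := fun _ => 0) hr hc
    (fun θ => hasDerivAt_const θ 1) (fun θ => hasDerivAt_const θ 0) continuous_const
  simpa using this

/-- Symmetry of the bilinear form polarizing the area; only one of the two functions has to satisfy
the closure conditions. -/
theorem integral_supp_mul_comm {r g : ℝ → ℝ} (hr : Continuous r) (hc : IsClosing r)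
    (hg : Continuous g) :
    ∫ θ in (0:ℝ)..(2 * π), supp g θ * r θ = ∫ θ in (0:ℝ)..(2 * π), supp r θ * g θ := by
  have := green (f := supp g) (f' := suppDeriv g) (f'' := fun θ => g θ - supp g θ) hr hc
    (hasDerivAt_supp hg) (hasDerivAt_suppDeriv hg) (hg.sub (continuous_supp hg))
  simp only [sub_add_cancel] at this
  rw [this]; exact intervalIntegral.integral_congr fun θ _ => mul_comm _ _

/-! ### A weak isoperimetric inequality -/

theorem mul_sin_le_two {u : ℝ} (h1 : -π ≤ u) (h2 : u ≤ π) : u * Real.sin u ≤ 2 := by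
  wlog hu : 0 ≤ u generalizing u
  · have := this (u := -u) (by linarith) (by linarith) (by linarith)
    simpa using this
  have hpi := Real.pi_gt_d2
  have hpi' := Real.pi_lt_d2
  rcases le_total u (π / 2) with h | h
  · nlinarith [Real.sin_le_one u]
  obtain ⟨w, rfl⟩ : ∃ w, u = w + π / 2 := ⟨u - π / 2, by ring⟩
  rw [Real.sin_add_pi_div_two]
  rcases le_total w 1 with hw | hw
  -- near `w = 0.4` the product reaches about `1.82`, so a fourth-order bound on `cos` is needed
  · have hw0 : 0 ≤ w := by linarith
    have hb := (abs_le.1 (Real.cos_bound (x := w) (by rw [abs_of_nonneg hw0]; exact hw))).2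
    rw [abs_of_nonneg hw0] at hb
    have h4 : w ^ 4 ≤ w ^ 2 := pow_le_pow_of_le_one hw0 hw (by norm_num)
    have hcos : Real.cos w ≤ 1 - 43 / 96 * w ^ 2 := by linarith
    calc (w + π / 2) * Real.cos w ≤ (w + π / 2) * (1 - 43 / 96 * w ^ 2) := by gcongr
      _ ≤ (w + 1.575) * (1 - 43 / 96 * w ^ 2) := by
          have : 0 ≤ 1 - 43 / 96 * w ^ 2 := by nlinarith
          gcongr; linarith
      _ ≤ 2 := by nlinarith [mul_nonneg hw0 (sq_nonneg (w - 1/2)), sq_nonneg (w - 1/2)]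
  · have hs : Real.cos w ≤ π / 2 - w := by
      rw [← Real.sin_pi_div_two_sub]; exact Real.sin_le (by linarith)
    calc (w + π / 2) * Real.cos w ≤ (w + π / 2) * (π / 2 - w) := by gcongr
      _ ≤ 2 := by nlinarith

/-- The kernel `(1 - φ/π) sin φ`. Since it is nonnegative and at most `2/π` on `[0, 2π]`, writing the
area as a double integral against `kern |θ - β|` bounds it from both sides. -/
noncomputable def kern (φ : ℝ) : ℝ := (1 - φ / π) * Real.sin φ

theorem kern_le {φ : ℝ} (h0 : 0 ≤ φ) (h1 : φ ≤ 2 * π) : kern φ ≤ 2 / π := by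
  have hpi := Real.pi_pos
  have := mul_sin_le_two (u := π - φ) (by linarith) (by linarith)
  rw [Real.sin_pi_sub] at this
  rw [kern, le_div_iff₀ hpi]
  calc _ = (π - φ) * Real.sin φ := by field_simp
    _ ≤ 2 := this

theorem kern_nonneg {φ : ℝ} (h0 : 0 ≤ φ) (h1 : φ ≤ 2 * π) : 0 ≤ kern φ := by
  have hpi := Real.pi_pos
  rw [kern]
  rcases le_total φ π with h | h
  · exact mul_nonneg (by rw [sub_nonneg, div_le_one hpi]; exact h) (Real.sin_nonneg_of_nonneg_of_le_pi h0 h)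
  · refine mul_nonneg_of_nonpos_of_nonpos (by rw [sub_nonpos, one_le_div hpi]; exact h) ?_
    have := Real.sin_nonneg_of_nonneg_of_le_pi (x := φ - π) (by linarith) (by linarith)
    rw [Real.sin_sub_pi] at this; linarith

/-- Integrating `kern |θ - β|` against `r` gives `2 supp r θ` up to a translation term, that is, a
linear combination of `sin θ` and `cos θ` with coefficients independent of `θ`. -/
theorem integral_kern {r : ℝ → ℝ} (hr : Continuous r) (hc : IsClosing r) {θ : ℝ}
    (h0 : 0 ≤ θ) (h1 : θ ≤ 2 * π) :
    ∫ β in (0:ℝ)..(2 * π), kern |θ - β| * r β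
      = 2 * supp r θ + (1 / π) * ((∫ β in (0:ℝ)..(2 * π), β * (Real.cos β * r β)) * Real.sin θ
        - (∫ β in (0:ℝ)..(2 * π), β * (Real.sin β * r β)) * Real.cos θ) := by
  have ii : ∀ {f : ℝ → ℝ} (a b : ℝ), Continuous f → IntervalIntegrable f volume a b :=
    fun a b hf => hf.intervalIntegrable a b
  have hk : Continuous kern := by unfold kern; fun_prop
  have kabs : ∀ β, kern |θ - β| = Real.sin |θ - β| - (θ - β) * Real.sin (θ - β) / π := by
    intro β
    rcases abs_cases (θ - β) with ⟨h, _⟩ | ⟨h, _⟩ <;> rw [h, kern] <;> try rw [Real.sin_neg]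
    all_goals ring
  have hadd := intervalIntegral.integral_add_adjacent_intervals
    (ii (f := fun β => kern |θ - β| * r β) 0 θ (by fun_prop)) (ii θ (2 * π) (by fun_prop))
  -- on `β ≤ θ`, `sin |θ - β| = 2 sin (θ - β) - sin (θ - β)`; the second term, which integrates to `0`
  -- over a period by closure, is the one that appears on `θ ≤ β`
  have e1 : ∫ β in (0:ℝ)..θ, kern |θ - β| * r β =
      ∫ β in (0:ℝ)..θ, (2 * (Real.sin θ * (Real.cos β * r β) - Real.cos θ * (Real.sin β * r β))
       + (-Real.sin (θ - β) * r β - (θ - β) * Real.sin (θ - β) / π * r β)) := by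
    refine intervalIntegral.integral_congr fun β hβ => ?_
    rw [uIcc_of_le h0] at hβ
    simp only [kabs]
    rw [abs_of_nonneg (by linarith [hβ.2]), Real.sin_sub]; ring
  have e2 : ∫ β in θ..(2 * π), kern |θ - β| * r β =
      ∫ β in θ..(2 * π), (-Real.sin (θ - β) * r β - (θ - β) * Real.sin (θ - β) / π * r β) := by
    refine intervalIntegral.integral_congr fun β hβ => ?_
    rw [uIcc_of_le h1] at hβ
    simp only [kabs]
    rw [abs_of_nonpos (by linarith [hβ.1]), Real.sin_neg]; ring
  rw [← hadd, e1, e2, intervalIntegral.integral_add (ii _ _ (by fun_prop)) (ii _ _ (by fun_prop)),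
    add_assoc, intervalIntegral.integral_add_adjacent_intervals (ii _ _ (by fun_prop))
      (ii _ _ (by fun_prop)), intervalIntegral.integral_const_mul,
    intervalIntegral.integral_sub (ii _ _ (by fun_prop)) (ii _ _ (by fun_prop)),
    intervalIntegral.integral_const_mul, intervalIntegral.integral_const_mul]
  have e3 : ∫ β in (0:ℝ)..(2 * π), (-Real.sin (θ - β) * r β - (θ - β) * Real.sin (θ - β) / π * r β)
      = ∫ β in (0:ℝ)..(2 * π), ((-(1 + θ / π) * Real.sin θ) * (Real.cos β * r β)
        + ((1 + θ / π) * Real.cos θ) * (Real.sin β * r β)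
        + (Real.sin θ / π) * (β * (Real.cos β * r β))
        - (Real.cos θ / π) * (β * (Real.sin β * r β))) := by
    refine intervalIntegral.integral_congr fun β _ => ?_
    simp only [Real.sin_sub]; ring
  rw [e3, intervalIntegral.integral_sub (ii _ _ (by fun_prop)) (ii _ _ (by fun_prop)),
    intervalIntegral.integral_add (ii _ _ (by fun_prop)) (ii _ _ (by fun_prop)),
    intervalIntegral.integral_add (ii _ _ (by fun_prop)) (ii _ _ (by fun_prop)),
    intervalIntegral.integral_const_mul, intervalIntegral.integral_const_mul,
    intervalIntegral.integral_const_mul, intervalIntegral.integral_const_mul, hc.1, hc.2, supp]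
  ring

/-- The translation term of `integral_kern` integrates to zero against `r` by closure. Both sides are
four times the enclosed area. -/
theorem four_area {r : ℝ → ℝ} (hr : Continuous r) (hc : IsClosing r) :
    ∫ θ in (0:ℝ)..(2 * π), (∫ β in (0:ℝ)..(2 * π), kern |θ - β| * r β) * r θ
      = 2 * ∫ θ in (0:ℝ)..(2 * π), supp r θ * r θ := by
  have hp := continuous_supp hr
  have ii : ∀ {f : ℝ → ℝ} (a b : ℝ), Continuous f → IntervalIntegrable f volume a b :=
    fun a b hf => hf.intervalIntegrable a b
  set A := ∫ β in (0:ℝ)..(2 * π), β * (Real.cos β * r β) with hA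
  set B := ∫ β in (0:ℝ)..(2 * π), β * (Real.sin β * r β) with hB
  have e : ∫ θ in (0:ℝ)..(2 * π), (∫ β in (0:ℝ)..(2 * π), kern |θ - β| * r β) * r θ =
      ∫ θ in (0:ℝ)..(2 * π), (2 * (supp r θ * r θ) + (A / π) * (Real.sin θ * r θ)
        - (B / π) * (Real.cos θ * r θ)) := by
    refine intervalIntegral.integral_congr fun θ hθ => ?_
    rw [uIcc_of_le (by positivity)] at hθ
    simp only [integral_kern hr hc hθ.1 hθ.2]; ring
  rw [e, intervalIntegral.integral_sub (ii _ _ (by fun_prop)) (ii _ _ (by fun_prop)),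
    intervalIntegral.integral_add (ii _ _ (by fun_prop)) (ii _ _ (by fun_prop)),
    intervalIntegral.integral_const_mul, intervalIntegral.integral_const_mul,
    intervalIntegral.integral_const_mul, hc.1, hc.2]
  ring

/-- The inequality `σ² ≥ 2πλ`, since the integral on the left is `2λ`. The sharp constant `4π` is not
needed for the monotonicity of `σ/λ`. -/
theorem isoperimetric {r : ℝ → ℝ} (hr : Continuous r) (hpos : ∀ θ, 0 < r θ) (hc : IsClosing r) :
    π * ∫ θ in (0:ℝ)..(2 * π), supp r θ * r θ ≤ (∫ θ in (0:ℝ)..(2 * π), r θ) ^ 2 := by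
  have hpi := Real.pi_pos
  have hk : Continuous kern := by unfold kern; fun_prop
  set S := ∫ θ in (0:ℝ)..(2 * π), r θ with hS
  have inner : ∀ θ ∈ Icc 0 (2 * π), ∫ β in (0:ℝ)..(2 * π), kern |θ - β| * r β ≤ 2 / π * S := by
    intro θ hθ
    rw [hS, ← intervalIntegral.integral_const_mul]
    refine intervalIntegral.integral_mono_on (by positivity)
      (Continuous.intervalIntegrable (by fun_prop) _ _)
      (Continuous.intervalIntegrable (by fun_prop) _ _) fun β hβ => ?_
    refine mul_le_mul_of_nonneg_right (kern_le (abs_nonneg _) ?_) (hpos β).le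
    exact abs_le.2 ⟨by linarith [hθ.1, hβ.2], by linarith [hθ.2, hβ.1]⟩
  have hq : Continuous fun θ => ∫ β in (0:ℝ)..(2 * π), kern |θ - β| * r β :=
    intervalIntegral.continuous_parametric_intervalIntegral_of_continuous' (by fun_prop) _ _
  have h : ∫ θ in (0:ℝ)..(2 * π), (∫ β in (0:ℝ)..(2 * π), kern |θ - β| * r β) * r θ
      ≤ ∫ θ in (0:ℝ)..(2 * π), (2 / π * S) * r θ := by
    refine intervalIntegral.integral_mono_on (by positivity)
      (Continuous.intervalIntegrable (by fun_prop) _ _)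
      (Continuous.intervalIntegrable (by fun_prop) _ _) fun θ hθ => ?_
    exact mul_le_mul_of_nonneg_right (inner θ hθ) (hpos θ).le
  rw [four_area hr hc, intervalIntegral.integral_const_mul, ← hS, div_mul_eq_mul_div,
    div_mul_eq_mul_div, le_div_iff₀ hpi] at h
  linarith

theorem area_pos {r : ℝ → ℝ} (hr : Continuous r) (hpos : ∀ θ, 0 < r θ) (hc : IsClosing r) :
    0 < ∫ θ in (0:ℝ)..(2 * π), supp r θ * r θ := by
  have hpi := Real.pi_pos
  have hk : Continuous kern := by unfold kern; fun_prop
  have hq : Continuous fun θ => ∫ β in (0:ℝ)..(2 * π), kern |θ - β| * r β :=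
    intervalIntegral.continuous_parametric_intervalIntegral_of_continuous' (by fun_prop) _ _
  have nn : ∀ θ ∈ Icc 0 (2 * π), ∀ β ∈ Icc 0 (2 * π), 0 ≤ kern |θ - β| * r β := by
    intro θ hθ β hβ
    refine mul_nonneg (kern_nonneg (abs_nonneg _) ?_) (hpos β).le
    exact abs_le.2 ⟨by linarith [hθ.1, hβ.2], by linarith [hθ.2, hβ.1]⟩
  have h : 0 < ∫ θ in (0:ℝ)..(2 * π), (∫ β in (0:ℝ)..(2 * π), kern |θ - β| * r β) * r θ := by
    refine intervalIntegral.integral_pos (by positivity) (by fun_prop) (fun θ hθ => ?_)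
      ⟨π, ⟨by linarith, by linarith⟩, ?_⟩
    · exact mul_nonneg (intervalIntegral.integral_nonneg (by positivity)
        (nn θ (Ioc_subset_Icc_self hθ))) (hpos θ).le
    · refine mul_pos ?_ (hpos π)
      refine intervalIntegral.integral_pos (by positivity) (by fun_prop)
        (fun β hβ => nn π ⟨by linarith, by linarith⟩ β (Ioc_subset_Icc_self hβ))
        ⟨π / 2, ⟨by linarith, by linarith⟩, mul_pos ?_ (hpos _)⟩
      have : |π - π / 2| = π / 2 := by rw [abs_of_nonneg] <;> linarith
      rw [this, kern, Real.sin_pi_div_two]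
      field_simp; norm_num
  rw [four_area hr hc] at h
  linarith

/-- Cauchy–Schwarz for `√ρ` and `1/√ρ`. -/
theorem cauchy_schwarz {ρ : ℝ → ℝ} (hρ : Continuous ρ) (hpos : ∀ θ, 0 < ρ θ) :
    4 * π ^ 2 ≤ (∫ θ in (0:ℝ)..(2 * π), ρ θ) * ∫ θ in (0:ℝ)..(2 * π), 1 / ρ θ := by
  have hpi := Real.pi_pos
  have hne : ∀ θ, ρ θ ≠ 0 := fun θ => (hpos θ).ne'
  have hri : Continuous fun θ => 1 / ρ θ := by fun_prop (disch := assumption)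
  set R := ∫ θ in (0:ℝ)..(2 * π), ρ θ with hR
  set S := ∫ θ in (0:ℝ)..(2 * π), 1 / ρ θ with hS
  have hSpos : 0 < S := intervalIntegral.intervalIntegral_pos_of_pos
    (hri.intervalIntegrable _ _) (fun θ => one_div_pos.2 (hpos θ)) (by positivity)
  have h : ∀ a : ℝ, 2 * a * (2 * π) ≤ a ^ 2 * R + S := by
    intro a
    have : ∫ θ in (0:ℝ)..(2 * π), 2 * a ≤ ∫ θ in (0:ℝ)..(2 * π), (a ^ 2 * ρ θ + 1 / ρ θ) := by
      refine intervalIntegral.integral_mono_on (by positivity)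
        (Continuous.intervalIntegrable (by fun_prop) _ _)
        (Continuous.intervalIntegrable (by fun_prop) _ _) fun θ _ => ?_
      have : a ^ 2 * ρ θ + 1 / ρ θ - 2 * a = (a * ρ θ - 1) ^ 2 / ρ θ := by
        field_simp [hne θ]; ring
      have h2 : 0 ≤ (a * ρ θ - 1) ^ 2 / ρ θ := div_nonneg (sq_nonneg _) (hpos θ).le
      linarith
    rw [intervalIntegral.integral_add (Continuous.intervalIntegrable (by fun_prop) _ _)
      (Continuous.intervalIntegrable (by fun_prop) _ _),
      intervalIntegral.integral_const_mul (a ^ 2), intervalIntegral.integral_const,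
      smul_eq_mul] at this
    linarith
  -- this choice of `a` gives the stated constant
  have h' := h (S / (2 * π))
  have e1 : 2 * (S / (2 * π)) * (2 * π) = 2 * S := by field_simp
  rw [e1, div_pow, div_mul_eq_mul_div] at h'
  have h2 : S ≤ S ^ 2 * R / (2 * π) ^ 2 := by linarith
  rw [le_div_iff₀ (by positivity)] at h2
  have h3 : S * (4 * π ^ 2) ≤ S * (R * S) := by nlinarith
  exact le_of_mul_le_mul_left h3 hSpos

/-! ### Time derivatives of perimeter and area -/

theorem hasDerivAt_integral_param {F F' : ℝ → ℝ → ℝ} {U : Set ℝ} (hU : IsOpen U)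
    (hF : Continuous (Function.uncurry F)) (hF' : Continuous (Function.uncurry F'))
    (hd : ∀ t ∈ U, ∀ θ, HasDerivAt (fun s => F s θ) (F' t θ) t) (a c : ℝ) {t : ℝ} (ht : t ∈ U) :
    HasDerivAt (fun s => ∫ θ in a..c, F s θ) (∫ θ in a..c, F' t θ) t := by
  obtain ⟨ε, hε, hball⟩ := Metric.nhds_basis_closedBall.mem_iff.1 (hU.mem_nhds ht)
  obtain ⟨M, hM⟩ := ((isCompact_closedBall t ε).prod (isCompact_uIcc (a := a) (b := c))).exists_bound_of_continuousOn
    hF'.continuousOn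
  have hcF : ∀ s, Continuous (F s) := fun s => hF.comp (by fun_prop : Continuous fun θ => (s, θ))
  have hcF' : ∀ s, Continuous (F' s) := fun s => hF'.comp (by fun_prop : Continuous fun θ => (s, θ))
  refine (intervalIntegral.hasDerivAt_integral_of_dominated_loc_of_deriv_le (bound := fun _ => M)
    (Metric.closedBall_mem_nhds t hε)
    (Eventually.of_forall fun s => (hcF s).aestronglyMeasurable) ((hcF t).intervalIntegrable _ _)
    (hcF' t).aestronglyMeasurable (ae_of_all _ fun θ hθ s hs => ?_)
    intervalIntegrable_const (ae_of_all _ fun θ _ s hs => hd s (hball hs) θ)).2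
  exact hM (s, θ) ⟨hs, uIoc_subset_uIcc hθ⟩

theorem continuous_supp_uncurry {r : ℝ → ℝ → ℝ} (hr : Continuous (Function.uncurry r)) :
    Continuous (Function.uncurry fun t => supp (r t)) := by
  have hX : Continuous fun p : ℝ × ℝ => ∫ β in (0:ℝ)..p.2, Real.cos β * r p.1 β :=
    intervalIntegral.continuous_parametric_intervalIntegral_of_continuous
      (f := fun (p : ℝ × ℝ) β => Real.cos β * r p.1 β)
      ((Real.continuous_cos.comp continuous_snd).mul
        (hr.comp (by fun_prop : Continuous fun q : (ℝ × ℝ) × ℝ => (q.1.1, q.2)))) continuous_snd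
  have hY : Continuous fun p : ℝ × ℝ => ∫ β in (0:ℝ)..p.2, Real.sin β * r p.1 β :=
    intervalIntegral.continuous_parametric_intervalIntegral_of_continuous
      (f := fun (p : ℝ × ℝ) β => Real.sin β * r p.1 β)
      ((Real.continuous_sin.comp continuous_snd).mul
        (hr.comp (by fun_prop : Continuous fun q : (ℝ × ℝ) × ℝ => (q.1.1, q.2)))) continuous_snd
  exact (hX.mul (by fun_prop)).sub (hY.mul (by fun_prop))

theorem hasDerivAt_supp_param {r g : ℝ → ℝ → ℝ} {U : Set ℝ} (hU : IsOpen U)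
    (hr : Continuous (Function.uncurry r)) (hg : Continuous (Function.uncurry g))
    (hd : ∀ t ∈ U, ∀ θ, HasDerivAt (fun s => r s θ) (g t θ) t) {t : ℝ} (ht : t ∈ U) (θ : ℝ) :
    HasDerivAt (fun s => supp (r s) θ) (supp (g t) θ) t := by
  have hX := hasDerivAt_integral_param (F := fun s β => Real.cos β * r s β)
    (F' := fun s β => Real.cos β * g s β) hU
    ((Real.continuous_cos.comp continuous_snd).mul hr)
    ((Real.continuous_cos.comp continuous_snd).mul hg)
    (fun t ht θ => (hd t ht θ).const_mul _) 0 θ ht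
  have hY := hasDerivAt_integral_param (F := fun s β => Real.sin β * r s β)
    (F' := fun s β => Real.sin β * g s β) hU
    ((Real.continuous_sin.comp continuous_snd).mul hr)
    ((Real.continuous_sin.comp continuous_snd).mul hg)
    (fun t ht θ => (hd t ht θ).const_mul _) 0 θ ht
  exact (hX.mul_const _).sub (hY.mul_const _)

/-- First variation of twice the area: differentiating the quadratic form yields two terms, equal by
`integral_supp_mul_comm`. -/
theorem hasDerivAt_area {r g : ℝ → ℝ → ℝ} {U : Set ℝ} (hU : IsOpen U)
    (hr : Continuous (Function.uncurry r)) (hg : Continuous (Function.uncurry g))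
    (hd : ∀ t ∈ U, ∀ θ, HasDerivAt (fun s => r s θ) (g t θ) t) {t : ℝ} (ht : t ∈ U)
    (hc : IsClosing (r t)) :
    HasDerivAt (fun s => ∫ θ in (0:ℝ)..(2 * π), supp (r s) θ * r s θ)
      (2 * ∫ θ in (0:ℝ)..(2 * π), supp (r t) θ * g t θ) t := by
  have hsr := continuous_supp_uncurry hr
  have hsg := continuous_supp_uncurry hg
  have hrt : Continuous (r t) := hr.comp (by fun_prop : Continuous fun θ => (t, θ))
  have hgt : Continuous (g t) := hg.comp (by fun_prop : Continuous fun θ => (t, θ))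
  refine (hasDerivAt_integral_param (F := fun s θ => supp (r s) θ * r s θ)
    (F' := fun s θ => supp (g s) θ * r s θ + supp (r s) θ * g s θ) hU
    (hsr.mul hr) ((hsg.mul hr).add (hsr.mul hg))
    (fun t ht θ => (hasDerivAt_supp_param hU hr hg hd ht θ).mul (hd t ht θ)) 0 (2 * π)
    ht).congr_deriv ?_
  have h1 := continuous_supp hgt
  have h2 := continuous_supp hrt
  rw [intervalIntegral.integral_add (Continuous.intervalIntegrable (by fun_prop) _ _)
    (Continuous.intervalIntegrable (by fun_prop) _ _),
    integral_supp_mul_comm hrt hc hgt]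
  ring

theorem encArea_eq (ρ : ℝ → ℝ) :
    encArea ρ = (1 / 2) * ∫ θ in (0:ℝ)..(2 * π), supp (fun θ => 1 / ρ θ) θ * (1 / ρ θ) := by
  simp only [encArea, curveP, supp, mul_one_div]

/-! ### Monotonicity of the ratio of perimeter to area -/

theorem second_deriv_nonneg {f : ℝ → ℝ} (hf : Continuous f) {x : ℝ} (hx : ∀ y, f x ≤ f y) :
    0 ≤ iteratedDeriv 2 f x := by
  by_contra! h
  have hmin : IsLocalMin f x := Eventually.of_forall hx
  rw [iteratedDeriv_succ, iteratedDeriv_one] at h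
  have hmax := isLocalMax_of_deriv_deriv_neg h hmin.deriv_eq_zero hf.continuousAt
  have : f =ᶠ[𝓝 x] fun _ => f x := hmax.mono fun y hy => le_antisymm hy (hx y)
  have h2 := this.deriv.deriv_eq
  simp at h2
  linarith

/-- The numerator `σ'λ - σλ'` of the derivative of `σ/λ`, with `S = σ`, `L = λ`, `R = ∫ ρ` and the
evolution equations `σ' = 4πh - R`, `λ' = 2hσ - 2π`. After multiplication by `σλ` it is at most
`-2 (σ² - πλ) (σ² - 2πλ)`. -/
theorem numerator_nonpos {S L R : ℝ} (hS : 0 < S) (hL : 0 < L) (hiso : 2 * π * L ≤ S ^ 2)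
    (hcs : 4 * π ^ 2 ≤ R * S) :
    (4 * π * (S / L) - R) * L - S * (2 * (S / L) * S - 2 * π) ≤ 0 := by
  have hpi := Real.pi_pos
  have e : (4 * π * (S / L) - R) * L - S * (2 * (S / L) * S - 2 * π)
      = (6 * π * S ^ 2 * L - (R * S) * L ^ 2 - 2 * S ^ 4) / (S * L) := by
    field_simp; ring
  rw [e]
  refine div_nonpos_of_nonpos_of_nonneg ?_ (by positivity)
  have h1 : 4 * π ^ 2 * L ^ 2 ≤ (R * S) * L ^ 2 := by gcongr
  have h2 : 0 ≤ (S ^ 2 - π * L) * (S ^ 2 - 2 * π * L) :=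
    mul_nonneg (by nlinarith [mul_pos hpi hL]) (by linarith)
  nlinarith

namespace IsRCFSolution

variable {T : ℝ} {ρ : ℝ → ℝ → ℝ}

theorem contDiff_slice (hρ : IsRCFSolution T ρ) {t : ℝ} (ht : t ∈ Ico 0 T) :
    ContDiff ℝ (⊤ : ℕ∞) (ρ t) := by
  rw [← contDiffOn_univ]
  exact hρ.1.comp (f := fun θ : ℝ => (t, θ)) (by fun_prop) fun θ _ => ⟨ht, mem_univ _⟩

theorem isClosing (hρ : IsRCFSolution T ρ) {t : ℝ} (ht : t ∈ Ico 0 T) :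
    IsClosing fun θ => 1 / ρ t θ := by
  obtain ⟨-, -, -, h1, h2, -⟩ := hρ
  exact ⟨by simpa only [mul_one_div] using h1 t ht, by simpa only [mul_one_div] using h2 t ht⟩

/-- The time derivative of `ρ`, taken from the Fréchet derivative within `[0, T) × ℝ` so that its joint
continuity, including at `t = 0`, comes with the smoothness of `ρ`. -/
noncomputable def speed (T : ℝ) (ρ : ℝ → ℝ → ℝ) (t θ : ℝ) : ℝ :=
  fderivWithin ℝ (Function.uncurry ρ) (Ico 0 T ×ˢ (univ : Set ℝ)) (t, θ) (1, 0)

theorem continuousOn_speed (hρ : IsRCFSolution T ρ) :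
    ContinuousOn (Function.uncurry (speed T ρ)) (Ico 0 T ×ˢ (univ : Set ℝ)) := by
  have hu : UniqueDiffOn ℝ (Ico 0 T ×ˢ (univ : Set ℝ)) := (uniqueDiffOn_Ico 0 T).prod uniqueDiffOn_univ
  exact (hρ.1.continuousOn_fderivWithin hu (by simp)).clm_apply continuousOn_const

theorem speed_eq (hρ : IsRCFSolution T ρ) {t : ℝ} (ht : t ∈ Ico 0 T) (θ : ℝ) :
    speed T ρ t θ =
      (ρ t θ) ^ 2 * iteratedDeriv 2 (ρ t) θ + (ρ t θ) ^ 2 * (ρ t θ - 2 * hRatio (ρ t)) := by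
  have h1 : HasFDerivWithinAt (Function.uncurry ρ) _ (Ico 0 T ×ˢ (univ : Set ℝ)) (t, θ) :=
    (hρ.1.differentiableOn (by simp) (t, θ) ⟨ht, mem_univ _⟩).hasFDerivWithinAt
  have h2 : HasDerivWithinAt (fun s : ℝ => (s, θ)) (1, 0) (Ico 0 T) t :=
    (hasDerivWithinAt_id t _).prodMk (hasDerivWithinAt_const t _ θ)
  have hm : MapsTo (fun s : ℝ => (s, θ)) (Ico 0 T) (Ico 0 T ×ˢ (univ : Set ℝ)) :=
    fun s hs => ⟨hs, mem_univ _⟩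
  have h3 := h1.comp_hasDerivWithinAt t h2 hm
  exact (uniqueDiffOn_Ico 0 T t ht).eq_deriv _ h3 (hρ.2.2.2.2.2 t ht θ)

/-- The ratio `h` is nonincreasing along the flow. -/
theorem hRatio_antitoneOn (hρ : IsRCFSolution T ρ) {b : ℝ} (hb0 : 0 ≤ b) (hb : b < T) :
    AntitoneOn (fun t => hRatio (ρ t)) (Icc 0 b) := by
  have hpi := Real.pi_pos
  have hpos := hρ.2.1
  have hper := hρ.2.2.1
  -- clamping the time to `[0, b]` turns continuity on `[0, T) × ℝ` into continuity on `ℝ × ℝ`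
  set P : ℝ → ℝ := fun t => (projIcc 0 b hb0 t : ℝ) with hP
  have hPc : Continuous P := continuous_subtype_val.comp continuous_projIcc
  have hPm : ∀ t, P t ∈ Ico 0 T := fun t =>
    ⟨(projIcc 0 b hb0 t).2.1, (projIcc 0 b hb0 t).2.2.trans_lt hb⟩
  have hPe : ∀ t ∈ Icc 0 b, P t = t := fun t ht => by rw [hP]; simp [projIcc_of_mem hb0 ht]
  have hPS : ∀ p : ℝ × ℝ, (P p.1, p.2) ∈ Ico 0 T ×ˢ (univ : Set ℝ) := fun p => ⟨hPm _, mem_univ _⟩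
  have hPP : Continuous fun p : ℝ × ℝ => (P p.1, p.2) := by fun_prop
  have hρc : Continuous fun p : ℝ × ℝ => ρ (P p.1) p.2 :=
    hρ.1.continuousOn.comp_continuous hPP hPS
  have hsc : Continuous fun p : ℝ × ℝ => speed T ρ (P p.1) p.2 :=
    hρ.continuousOn_speed.comp_continuous hPP hPS
  have hne : ∀ p : ℝ × ℝ, ρ (P p.1) p.2 ≠ 0 := fun p => (hpos _ (hPm _) _).ne'
  set r : ℝ → ℝ → ℝ := fun t θ => 1 / ρ (P t) θ with hr
  set g : ℝ → ℝ → ℝ := fun t θ => -speed T ρ (P t) θ / ρ (P t) θ ^ 2 with hg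
  have hrc : Continuous (Function.uncurry r) := continuous_const.div hρc hne
  have hgc : Continuous (Function.uncurry g) :=
    hsc.neg.div (hρc.pow 2) fun p => pow_ne_zero 2 (hne p)
  have hrt : ∀ t, Continuous (r t) := fun t => hrc.comp (by fun_prop : Continuous fun θ => (t, θ))
  have hrpos : ∀ t θ, 0 < r t θ := fun t θ => one_div_pos.2 (hpos _ (hPm t) θ)
  have hcl : ∀ t, IsClosing (r t) := fun t => hρ.isClosing (hPm t)
  have hd : ∀ t ∈ Ioo 0 b, ∀ θ, HasDerivAt (fun s => r s θ) (g t θ) t := by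
    intro t ht θ
    have htT : t ∈ Ico 0 T := ⟨ht.1.le, ht.2.trans hb⟩
    have h1 : HasDerivAt (fun s => ρ s θ) (speed T ρ t θ) t := by
      rw [hρ.speed_eq htT]
      exact (hρ.2.2.2.2.2 t htT θ).hasDerivAt (Ico_mem_nhds ht.1 (ht.2.trans hb))
    have h2 := h1.inv (hpos t htT θ).ne'
    have e : g t θ = -speed T ρ t θ / ρ t θ ^ 2 := by
      simp only [hg, hPe t (Ioo_subset_Icc_self ht)]
    rw [e]
    refine h2.congr_of_eventuallyEq ?_
    filter_upwards [Ioo_mem_nhds ht.1 ht.2] with s hs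
    simp [hr, hPe s (Ioo_subset_Icc_self hs)]
  -- perimeter and twice the area of the clamped family
  set S : ℝ → ℝ := fun t => ∫ θ in (0:ℝ)..(2 * π), r t θ with hS
  set A : ℝ → ℝ := fun t => ∫ θ in (0:ℝ)..(2 * π), supp (r t) θ * r t θ with hA
  have hSc : Continuous S :=
    intervalIntegral.continuous_parametric_intervalIntegral_of_continuous' hrc _ _
  have hAc : Continuous A :=
    intervalIntegral.continuous_parametric_intervalIntegral_of_continuous'
      (f := fun t θ => supp (r t) θ * r t θ) ((continuous_supp_uncurry hrc).mul hrc) _ _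
  have hApos : ∀ t, 0 < A t := fun t => area_pos (hrt t) (hrpos t) (hcl t)
  have hSpos : ∀ t, 0 < S t := fun t => intervalIntegral.intervalIntegral_pos_of_pos
    ((hrt t).intervalIntegrable _ _) (hrpos t) (by positivity)
  have hH : ∀ t ∈ Icc 0 b, hRatio (ρ t) = S t / (1 / 2 * A t) := by
    intro t ht
    simp only [hRatio, perim, encArea_eq, hS, hA, hr, hPe t ht]
  -- `σ' = 4πh - ∫ ρ` and `(2λ)' = 2 (2hσ - 2π)`, as `∂ₜ(1/ρ) = 2h - (∂²_θ ρ + ρ)`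
  have hS' : ∀ t ∈ Ioo 0 b, HasDerivAt S
      (4 * π * hRatio (ρ t) - ∫ θ in (0:ℝ)..(2 * π), ρ t θ) t ∧
      HasDerivAt A (2 * (2 * hRatio (ρ t) * S t - 2 * π)) t := by
    intro t ht
    have htI := Ioo_subset_Icc_self ht
    have htT : t ∈ Ico 0 T := ⟨ht.1.le, ht.2.trans hb⟩
    have hsm := hρ.contDiff_slice htT
    have hρt : Continuous (ρ t) := hsm.continuous
    have hd1 : ∀ θ, HasDerivAt (ρ t) (deriv (ρ t) θ) θ := fun θ =>
      (hsm.differentiable (by simp) θ).hasDerivAt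
    have hsm' : ContDiff ℝ (⊤ : ℕ∞) (deriv (ρ t)) :=
      ((contDiff_infty_iff_deriv (𝕜 := ℝ)).1 hsm).2
    have hd2 : ∀ θ, HasDerivAt (deriv (ρ t)) (iteratedDeriv 2 (ρ t) θ) θ := fun θ => by
      rw [iteratedDeriv_succ, iteratedDeriv_one]
      exact (hsm'.differentiable (by simp) θ).hasDerivAt
    have hdc : Continuous (iteratedDeriv 2 (ρ t)) := 
      (contDiff_infty.1 hsm 2).continuous_iteratedDeriv 2 le_rfl
    have hgt : ∀ θ, g t θ = 2 * hRatio (ρ t) - (iteratedDeriv 2 (ρ t) θ + ρ t θ) := by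
      intro θ
      have := (hpos t htT θ).ne'
      simp only [hg, hPe t htI, hρ.speed_eq htT]
      field_simp; ring
    have hrte : ∀ θ, r t θ * ρ t θ = 1 := fun θ => by
      simp only [hr, hPe t htI]; exact one_div_mul_cancel (hpos t htT θ).ne'
    have hpt := continuous_supp (hrt t)
    constructor
    · refine (hasDerivAt_integral_param isOpen_Ioo hrc hgc hd 0 (2 * π) ht).congr_deriv ?_
      have h0 : ∫ θ in (0:ℝ)..(2 * π), iteratedDeriv 2 (ρ t) θ = 0 := by
        rw [intervalIntegral.integral_eq_sub_of_hasDerivAt (fun θ _ => hd2 θ)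
          (hdc.intervalIntegrable _ _)]
        have : deriv (fun θ => ρ t (θ + 2 * π)) 0 = deriv (ρ t) 0 := by
          congr 1; exact funext (hper t htT)
        rw [deriv_comp_add_const, zero_add] at this
        rw [this, sub_self]
      simp only [hgt]
      rw [intervalIntegral.integral_sub (Continuous.intervalIntegrable (by fun_prop) _ _)
        (Continuous.intervalIntegrable (by fun_prop) _ _),
        intervalIntegral.integral_add (Continuous.intervalIntegrable (by fun_prop) _ _)
        (Continuous.intervalIntegrable (by fun_prop) _ _), h0, intervalIntegral.integral_const,
        smul_eq_mul]
      ring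
    · refine (hasDerivAt_area isOpen_Ioo hrc hgc hd ht (hcl t)).congr_deriv ?_
      have h0 := green (hrt t) (hcl t) hd1 hd2 hdc
      simp only [hrte, intervalIntegral.integral_const, smul_eq_mul] at h0
      have h1 := integral_supp (hrt t) (hcl t)
      have : ∫ θ in (0:ℝ)..(2 * π), supp (r t) θ * g t θ =
          ∫ θ in (0:ℝ)..(2 * π), (2 * hRatio (ρ t) * supp (r t) θ
            - supp (r t) θ * (iteratedDeriv 2 (ρ t) θ + ρ t θ)) :=
        intervalIntegral.integral_congr fun θ _ => by simp only [hgt]; ring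
      rw [this, intervalIntegral.integral_sub (Continuous.intervalIntegrable (by fun_prop) _ _)
        (Continuous.intervalIntegrable (by fun_prop) _ _), intervalIntegral.integral_const_mul,
        h0, h1]
      ring
  have hHd : ∀ t ∈ Ioo 0 b, HasDerivAt (fun t => hRatio (ρ t))
      (((4 * π * hRatio (ρ t) - ∫ θ in (0:ℝ)..(2 * π), ρ t θ) * (1 / 2 * A t)
        - S t * (1 / 2 * (2 * (2 * hRatio (ρ t) * S t - 2 * π)))) / (1 / 2 * A t) ^ 2) t := by
    intro t ht
    have hne' : 1 / 2 * A t ≠ 0 := (mul_pos one_half_pos (hApos t)).ne'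
    refine ((hS' t ht).1.div ((hS' t ht).2.const_mul (1 / 2)) hne').congr_of_eventuallyEq ?_
    filter_upwards [Ioo_mem_nhds ht.1 ht.2] with s hs
    exact hH s (Ioo_subset_Icc_self hs)
  refine antitoneOn_of_deriv_nonpos (convex_Icc 0 b) ?_ ?_ ?_
  · refine ContinuousOn.congr (f := fun t => S t / (1 / 2 * A t)) ?_ hH
    exact (hSc.div (continuous_const.mul hAc) fun t =>
      (mul_pos one_half_pos (hApos t)).ne').continuousOn
  · rw [interior_Icc]
    exact fun t ht => (hHd t ht).differentiableAt.differentiableWithinAt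
  · rw [interior_Icc]
    intro t ht
    rw [(hHd t ht).deriv]
    refine div_nonpos_of_nonpos_of_nonneg ?_ (sq_nonneg _)
    have htT : t ∈ Ico 0 T := ⟨ht.1.le, ht.2.trans hb⟩
    have hi := isoperimetric (hrt t) (hrpos t) (hcl t)
    have hcs := cauchy_schwarz (hρ.contDiff_slice htT).continuous (hpos t htT)
    have hSt : S t = ∫ θ in (0:ℝ)..(2 * π), 1 / ρ t θ := by
      simp only [hS, hr, hPe t (Ioo_subset_Icc_self ht)]
    rw [← hSt] at hcs
    have := numerator_nonpos (hSpos t) (half_pos (hApos t)) (by simp only [hA, hS] at hi ⊢; linarith) hcs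
    rw [hH t (Ioo_subset_Icc_self ht)]
    have e : A t / 2 = 1 / 2 * A t := by ring
    rw [e] at this
    linarith

theorem hRatio_le (hρ : IsRCFSolution T ρ) {t : ℝ} (ht : t ∈ Ico 0 T) :
    hRatio (ρ t) ≤ hRatio (ρ 0) :=
  hρ.hRatio_antitoneOn ht.1 ht.2 ⟨le_rfl, ht.1⟩ ⟨ht.1, le_rfl⟩ ht.1

theorem hRatio_nonneg (hρ : IsRCFSolution T ρ) {t : ℝ} (ht : t ∈ Ico 0 T) :
    0 ≤ hRatio (ρ t) := by
  have hpi := Real.pi_pos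
  have hr : Continuous fun θ => 1 / ρ t θ :=
    continuous_const.div (hρ.contDiff_slice ht).continuous fun θ => (hρ.2.1 t ht θ).ne'
  have hp : ∀ θ, 0 < 1 / ρ t θ := fun θ => one_div_pos.2 (hρ.2.1 t ht θ)
  rw [hRatio, encArea_eq]
  refine div_nonneg (intervalIntegral.integral_nonneg (by positivity) fun θ _ => (hp θ).le) ?_
  have := area_pos hr hp (hρ.isClosing ht)
  positivity

end IsRCFSolution

/-! ### The minimum principle -/

/-- Along the renormalized curvature flow, with strictly positive
initial curvature, `ρ(t,θ) ≥ ρ_inf(0) e^{−h₀² t}`, where `ρ_inf(0) = min_θ ρ(0,θ)`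
and `h₀ = h_0`; in particular the curves remain strictly convex. -/
theorem stmt8 (T : ℝ) (hT : 0 < T) (ρ : ℝ → ℝ → ℝ) (hρ : IsRCFSolution T ρ) :
    ∀ t ∈ Ico (0:ℝ) T, ∀ θ : ℝ,
      sInf (Set.range (ρ 0)) * Real.exp (-(hRatio (ρ 0)) ^ 2 * t) ≤ ρ t θ := by
  intro t₁ ht₁ θ₁
  have hpi := Real.pi_pos
  set h₀ := hRatio (ρ 0) with hh₀
  set m := sInf (Set.range (ρ 0)) with hm
  have h0T : (0:ℝ) ∈ Ico 0 T := ⟨le_rfl, hT⟩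
  have hmle : ∀ θ, m ≤ ρ 0 θ := fun θ =>
    csInf_le ⟨0, by rintro _ ⟨y, rfl⟩; exact (hρ.2.1 0 h0T y).le⟩ ⟨θ, rfl⟩
  -- it suffices to bound the perturbed quantity `e^{h₀² t} ρ + ε t` from below for every `ε > 0`
  have key : ∀ ε > 0, m ≤ Real.exp (h₀ ^ 2 * t₁) * ρ t₁ θ₁ + ε * t₁ := by
    intro ε hε
    set w : ℝ × ℝ → ℝ := fun p => Real.exp (h₀ ^ 2 * p.1) * ρ p.1 p.2 + ε * p.1 with hw
    have hsub : Icc 0 t₁ ×ˢ Icc 0 (2 * π) ⊆ Ico 0 T ×ˢ (univ : Set ℝ) :=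
      prod_mono (fun s hs => ⟨hs.1, hs.2.trans_lt ht₁.2⟩) (subset_univ _)
    have hwc : ContinuousOn w (Icc 0 t₁ ×ˢ Icc 0 (2 * π)) := by
      have h1 : ContinuousOn (fun p : ℝ × ℝ => ρ p.1 p.2) (Icc 0 t₁ ×ˢ Icc 0 (2 * π)) :=
        hρ.1.continuousOn.mono hsub
      exact ((by fun_prop : Continuous fun p : ℝ × ℝ => Real.exp (h₀ ^ 2 * p.1)).continuousOn.mul
        h1).add (by fun_prop)
    obtain ⟨⟨t, θ⟩, ⟨ht, hθ⟩, hmin⟩ := (isCompact_Icc.prod isCompact_Icc).exists_isMinOn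
      ⟨(0, 0), ⟨le_rfl, ht₁.1⟩, ⟨le_rfl, by positivity⟩⟩ hwc
    simp only at ht hθ
    have htT : t ∈ Ico 0 T := ⟨ht.1, ht.2.trans_lt ht₁.2⟩
    -- periodicity makes the minimum global in `θ`
    have hglob : ∀ s ∈ Icc 0 t₁, ∀ y, w (t, θ) ≤ w (s, y) := by
      intro s hs y
      have hp : Function.Periodic (ρ s) (2 * π) := hρ.2.2.1 s ⟨hs.1, hs.2.trans_lt ht₁.2⟩
      obtain ⟨z, hz, hzy⟩ := hp.exists_mem_Ico₀ (by positivity) y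
      have h1 : w (t, θ) ≤ w (s, z) := hmin ⟨hs, Ico_subset_Icc_self hz⟩
      simpa only [hw, hzy] using h1
    suffices h : t = 0 by
      have h1 := hglob t₁ ⟨ht₁.1, le_rfl⟩ θ₁
      simp only [hw, h, mul_zero, Real.exp_zero, one_mul, add_zero] at h1
      exact (hmle θ).trans h1
    by_contra hne
    have htpos : 0 < t := lt_of_le_of_ne ht.1 (Ne.symm hne)
    have hρpos := hρ.2.1 t htT θ
    have hspace : ∀ y, ρ t θ ≤ ρ t y := by
      intro y
      have h1 := hglob t ht y
      simp only [hw] at h1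
      exact le_of_mul_le_mul_left (le_of_add_le_add_right h1) (Real.exp_pos _)
    have hdd := second_deriv_nonneg (hρ.contDiff_slice htT).continuous hspace
    set D := (ρ t θ) ^ 2 * iteratedDeriv 2 (ρ t) θ + (ρ t θ) ^ 2 * (ρ t θ - 2 * hRatio (ρ t))
      with hD
    have hder : HasDerivAt (fun s => ρ s θ) D t :=
      (hρ.2.2.2.2.2 t htT θ).hasDerivAt (Ico_mem_nhds htpos htT.2)
    -- `ρ² - 2 h ρ ≥ -h² ≥ -h₀²`
    have hDge : 0 ≤ h₀ ^ 2 * ρ t θ + D := by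
      have h1 : hRatio (ρ t) ^ 2 ≤ h₀ ^ 2 :=
        pow_le_pow_left₀ (hρ.hRatio_nonneg htT) (hρ.hRatio_le htT) 2
      have h2 : 0 ≤ ρ t θ * ((ρ t θ - hRatio (ρ t)) ^ 2 + (h₀ ^ 2 - hRatio (ρ t) ^ 2)) :=
        mul_nonneg hρpos.le (add_nonneg (sq_nonneg _) (by linarith))
      have h3 : 0 ≤ (ρ t θ) ^ 2 * iteratedDeriv 2 (ρ t) θ := mul_nonneg (sq_nonneg _) hdd
      rw [hD]; nlinarith
    have hwd : HasDerivAt (fun s => w (s, θ))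
        (Real.exp (h₀ ^ 2 * t) * (h₀ ^ 2 * ρ t θ + D) + ε) t := by
      have h1 : HasDerivAt (fun s : ℝ => Real.exp (h₀ ^ 2 * s))
          (Real.exp (h₀ ^ 2 * t) * (h₀ ^ 2 * 1)) t := ((hasDerivAt_id t).const_mul (h₀ ^ 2)).exp
      refine ((h1.mul hder).add ((hasDerivAt_id t).const_mul ε)).congr_deriv ?_
      ring
    have hwpos : 0 < Real.exp (h₀ ^ 2 * t) * (h₀ ^ 2 * ρ t θ + D) + ε := by positivity
    -- a positive time derivative gives strictly smaller values at slightly earlier times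
    have hslope := (hasDerivAt_iff_tendsto_slope_left_right.1 hwd).1.eventually_const_lt hwpos
    obtain ⟨s, hs1, hs2⟩ := (hslope.and (Ioo_mem_nhdsLT htpos)).exists
    rw [slope_def_field] at hs1
    have h1 := hglob s ⟨hs2.1.le, hs2.2.le.trans ht.2⟩ θ
    exact absurd hs1 (not_lt.2 (div_nonpos_of_nonneg_of_nonpos (by linarith) (by linarith [hs2.2])))
  have hlim : m ≤ Real.exp (h₀ ^ 2 * t₁) * ρ t₁ θ₁ := by
    refine le_of_forall_pos_le_add fun δ hδ => ?_
    have h1 := key (δ / (t₁ + 1)) (div_pos hδ (by linarith [ht₁.1]))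
    have h2 : δ / (t₁ + 1) * t₁ ≤ δ := by
      rw [div_mul_eq_mul_div, div_le_iff₀ (by linarith [ht₁.1])]
      nlinarith
    linarith
  have hexp : -h₀ ^ 2 * t₁ = -(h₀ ^ 2 * t₁) := by ring
  rw [hexp, Real.exp_neg, ← div_eq_mul_inv, div_le_iff₀ (Real.exp_pos _)]
  linarith
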